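/- Let E be a real normed vector space, f : E → E a continuous open map, U ⊆ E a nonempty open set with f(U) ⊆ U, and A = ⋃_{n≥0} f^{-n}(U). Then the topological boundary ∂A equals the accumulation set of the sets f^{-n}(∂U), i.e. ∂A = { x ∈ E : there exist a sequence n_k → ∞ and points x_k ∈ f^{-n_k}(∂U) with x_k → x }. -/

import Mathlib

open Filter Topology

/-!
The sets `f^{-n}(U)` increase to `A`, and since `f` is continuous and open, `f^{-n}(∂U)` is the
boundary of `f^{-n}(U)`. So everything reduces to an increasing family of open sets `S i` with
union `A`. A small connected neighbourhood of a point of `∂A` meets `S i` for all large `i` and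
also meets the complement of `A`, so by connectedness it meets `∂(S i)`. Conversely, an
accumulation point of the `∂(S i)` lies in the closure of `A`, and not in `A`: otherwise some `S N`
would be a neighbourhood of it, and `S N ⊆ S i` is disjoint from `∂(S i)` for `i ≥ N`.
-/

section KuratowskiLimsup

variable {ι X : Type*} [TopologicalSpace X] {l : Filter ι} {S : ι → Set X} {x : X}

/-- The Kuratowski upper limit of the sets `S i` along `l`, that is, the set of their accumulation
points. It is defined by neighbourhoods; `mem_kuratowskiLimsup_iff_exists_seq` recovers the
sequential description in first-countable spaces. -/
def kuratowskiLimsup (l : Filter ι) (S : ι → Set X) : Set X :=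
  {x | ∀ V ∈ 𝓝 x, ∃ᶠ i in l, (V ∩ S i).Nonempty}

theorem mem_kuratowskiLimsup_iff_frequently_prod :
    x ∈ kuratowskiLimsup l S ↔ ∃ᶠ p in l ×ˢ 𝓝 x, p.2 ∈ S p.1 := by
  rw [(l.basis_sets.prod (𝓝 x).basis_sets).frequently_iff]
  constructor
  · rintro hx ⟨I, V⟩ ⟨hI, hV⟩
    obtain ⟨i, hi, y, hyV, hyS⟩ := frequently_iff.1 (hx V hV) hI
    exact ⟨(i, y), ⟨hi, hyV⟩, hyS⟩
  · refine fun hx V hV => frequently_iff.2 fun {I} hI => ?_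
    obtain ⟨⟨i, y⟩, ⟨hi, hyV⟩, hyS⟩ := hx (i := (I, V)) ⟨hI, hV⟩
    exact ⟨i, hi, y, hyV, hyS⟩

theorem mem_kuratowskiLimsup_iff_exists_seq [FirstCountableTopology X]
    [l.IsCountablyGenerated] :
    x ∈ kuratowskiLimsup l S ↔ ∃ (i : ℕ → ι) (y : ℕ → X),
      Tendsto i atTop l ∧ (∀ k, y k ∈ S (i k)) ∧ Tendsto y atTop (𝓝 x) := by
  rw [mem_kuratowskiLimsup_iff_frequently_prod, frequently_iff_seq_forall]
  constructor
  · rintro ⟨p, hp, hpS⟩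
    exact ⟨fun k => (p k).1, fun k => (p k).2, hp.fst, hpS, hp.snd⟩
  · rintro ⟨i, y, hi, hyS, hy⟩
    exact ⟨fun k => (i k, y k), hi.prodMk hy, hyS⟩

end KuratowskiLimsup

section Frontier

variable {X : Type*} [TopologicalSpace X]

theorem inter_frontier_nonempty_of_isPreconnected {s t : Set X} (hs : IsPreconnected s)
    (hst : (s ∩ t).Nonempty) (hst' : (s ∩ tᶜ).Nonempty) : (s ∩ frontier t).Nonempty := by
  by_contra! hdisj
  have hcover : s ⊆ interior t ∪ (closure t)ᶜ := fun x hx =>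
    or_iff_not_imp_left.2 fun hint hcl => hdisj.subset ⟨hx, hcl, hint⟩
  obtain ⟨a, has, hat⟩ := hst
  have ha : a ∈ interior t := (hcover has).resolve_right fun h => h (subset_closure hat)
  have hsub : s ⊆ interior t :=
    hs.subset_left_of_subset_union isOpen_interior isClosed_closure.isOpen_compl
      (Set.disjoint_compl_right_iff_subset.2 interior_subset_closure) hcover ⟨a, has, ha⟩
  obtain ⟨b, hbs, hbt⟩ := hst'
  exact hbt (interior_subset (hsub hbs))

variable {ι : Type*} [Preorder ι] {S : ι → Set X}

theorem eventually_inter_frontier_nonempty_of_mem_frontier_iUnion [LocallyConnectedSpace X]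
    (hS : Monotone S) {x : X} (hx : x ∈ frontier (⋃ i, S i)) {V : Set X} (hV : V ∈ 𝓝 x) :
    ∀ᶠ i in atTop, (V ∩ frontier (S i)).Nonempty := by
  obtain ⟨W, hW, hWconn, hWV⟩ := locallyConnectedSpace_iff_connected_subsets.1 ‹_› x V hV
  rw [frontier_eq_closure_inter_closure] at hx
  obtain ⟨a, haW, haA⟩ := mem_closure_iff_nhds.1 hx.1 W hW
  obtain ⟨b, hbW, hbA⟩ := mem_closure_iff_nhds.1 hx.2 W hW
  obtain ⟨N, haN⟩ := Set.mem_iUnion.1 haA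
  filter_upwards [eventually_ge_atTop N] with i hi
  have hWfr : (W ∩ frontier (S i)).Nonempty :=
    inter_frontier_nonempty_of_isPreconnected hWconn ⟨a, haW, hS hi haN⟩
      ⟨b, hbW, fun hb => hbA (Set.mem_iUnion_of_mem i hb)⟩
  exact hWfr.mono (Set.inter_subset_inter_left _ hWV)

theorem frontier_iUnion_subset_kuratowskiLimsup [LocallyConnectedSpace X] [IsDirectedOrder ι]
    (hS : Monotone S) :
    frontier (⋃ i, S i) ⊆ kuratowskiLimsup atTop fun i => frontier (S i) := by
  intro x hx V hV
  have : Nonempty ι := by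
    by_contra hι
    rw [not_nonempty_iff] at hι
    simp only [Set.iUnion_of_empty, frontier_empty, Set.mem_empty_iff_false] at hx
  exact (eventually_inter_frontier_nonempty_of_mem_frontier_iUnion hS hx hV).frequently

theorem kuratowskiLimsup_frontier_subset (hS : Monotone S) (hopen : ∀ i, IsOpen (S i)) :
    (kuratowskiLimsup atTop fun i => frontier (S i)) ⊆ frontier (⋃ i, S i) := by
  intro x hx
  rw [(isOpen_iUnion hopen).frontier_eq]
  constructor
  · rw [← closure_closure]
    refine mem_closure_iff_nhds.2 fun V hV => ?_
    obtain ⟨i, hi⟩ := (hx V hV).exists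
    exact hi.mono <| Set.inter_subset_inter_right V <|
      frontier_subset_closure.trans (closure_mono (Set.subset_iUnion S i))
  · intro hxA
    obtain ⟨N, hN⟩ := Set.mem_iUnion.1 hxA
    obtain ⟨i, ⟨y, hyN, hyfr⟩, hNi⟩ :=
      ((hx (S N) ((hopen N).mem_nhds hN)).and_eventually (eventually_ge_atTop N)).exists
    exact (hopen i).inter_frontier_eq.subset ⟨hS hNi hyN, hyfr⟩

theorem frontier_iUnion_eq_kuratowskiLimsup [LocallyConnectedSpace X] [IsDirectedOrder ι]
    (hS : Monotone S) (hopen : ∀ i, IsOpen (S i)) :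
    frontier (⋃ i, S i) = kuratowskiLimsup atTop fun i => frontier (S i) :=
  (frontier_iUnion_subset_kuratowskiLimsup hS).antisymm (kuratowskiLimsup_frontier_subset hS hopen)

end Frontier

section Iterate

theorem monotone_preimage_iterate {α : Type*} {f : α → α} {U : Set α} (h : Set.MapsTo f U U) :
    Monotone fun n : ℕ => f^[n] ⁻¹' U := by
  refine monotone_nat_of_le_succ fun n x hx => ?_
  rw [Set.mem_preimage, Function.iterate_succ_apply']
  exact h hx

variable {X : Type*} [TopologicalSpace X] {f : X → X}

theorem isOpenMap_iterate (ho : IsOpenMap f) : ∀ n : ℕ, IsOpenMap f^[n]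
  | 0 => IsOpenMap.id
  | n + 1 => (isOpenMap_iterate ho n).comp ho

theorem preimage_iterate_frontier (hc : Continuous f) (ho : IsOpenMap f) (n : ℕ) (U : Set X) :
    f^[n] ⁻¹' frontier U = frontier (f^[n] ⁻¹' U) :=
  (isOpenMap_iterate ho n).preimage_frontier_eq_frontier_preimage (hc.iterate n) U

end Iterate

theorem stmt7_general {X : Type*} [TopologicalSpace X] [LocallyConnectedSpace X]
    [FirstCountableTopology X] (f : X → X) (hc : Continuous f) (ho : IsOpenMap f)
    (U : Set X) (hU : IsOpen U) (hinv : f '' U ⊆ U) :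
    frontier (⋃ n : ℕ, f^[n] ⁻¹' U) =
      {x : X | ∃ (nk : ℕ → ℕ) (xk : ℕ → X),
        Tendsto nk atTop atTop ∧
        (∀ k : ℕ, xk k ∈ f^[nk k] ⁻¹' frontier U) ∧
        Tendsto xk atTop (𝓝 x)} := by
  have hmono : Monotone fun n : ℕ => f^[n] ⁻¹' U :=
    monotone_preimage_iterate (Set.mapsTo_iff_image_subset.2 hinv)
  have hopen (n : ℕ) : IsOpen (f^[n] ⁻¹' U) := hU.preimage (hc.iterate n)
  rw [frontier_iUnion_eq_kuratowskiLimsup hmono hopen]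
  simp only [← preimage_iterate_frontier hc ho]
  exact Set.ext fun x => mem_kuratowskiLimsup_iff_exists_seq

/-- for a continuous open self-map `f` of a real normed space, a nonempty
open set `U` with `f(U) ⊆ U`, and `A = ⋃_{n≥0} f^{-n}(U)`, the boundary `∂A` equals the
accumulation set of the sets `f^{-n}(∂U)` as `n → ∞`. -/
theorem stmt7 {E : Type*} [NormedAddCommGroup E] [NormedSpace ℝ E]
    (f : E → E) (hc : Continuous f) (ho : IsOpenMap f)
    (U : Set E) (hU : IsOpen U) (hne : U.Nonempty) (hinv : f '' U ⊆ U) :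
    frontier (⋃ n : ℕ, f^[n] ⁻¹' U) =
      {x : E | ∃ (nk : ℕ → ℕ) (xk : ℕ → E),
        Tendsto nk atTop atTop ∧
        (∀ k : ℕ, xk k ∈ f^[nk k] ⁻¹' frontier U) ∧
        Tendsto xk atTop (𝓝 x)} :=
  stmt7_general f hc ho U hU hinv
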